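/- Fix real numbers t, r with 0 < t < 1, 0 < r < 1 and r² + t² = 1, let θ, η ∈ ℝ, and write x = e^{−iθ}, z = e^{−iη}. Then C := T(θ,θ) T(θ,η)^{−1} = [[x·conj(z), 0], [(r/t)(x·conj(z) − 1), 1]] and E := T(η,θ)^{−1} T(θ,θ) = [[1, (r/t)(1 − conj(x)·z)], [0, conj(x)·z]]. Moreover, det(CE) = det(EC) = 1 and (EC)^{−1} = (CE)^*. -/

import Mathlib

open Complex Matrix

noncomputable section

/-- The transfer matrix `T(θ,η) ∈ M₂(ℂ)`. -/
def Tmat (t r θ η : ℝ) : Matrix (Fin 2) (Fin 2) ℂ :=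
  !![-Complex.exp (-(η:ℂ) * I),
     ((r/t : ℝ) : ℂ) * (Complex.exp (((θ - η : ℝ) : ℂ) * I) - Complex.exp (-(η:ℂ) * I));
     ((r/t : ℝ) : ℂ) * (1 - Complex.exp (-(η:ℂ) * I)),
     -((1/t^2 : ℝ) : ℂ) * Complex.exp ((θ:ℂ) * I) +
       ((r^2/t^2 : ℝ) : ℂ) * (Complex.exp (((θ - η : ℝ) : ℂ) * I) + 1
         - Complex.exp (-(η:ℂ) * I))]

/-!
With `k = r / t` one has `1 / t ^ 2 = 1 + k ^ 2`, and the transfer matrix factors as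
`T(θ,η) = -L(e^{-iη}) U(e^{iθ})`, where both `L(w) = P diag(w, 1) P⁻¹` and
`U(u) = (Pᵀ)⁻¹ diag(1, u) Pᵀ`, for `P = [[1, 0], [k, 1]]`, are multiplicative in their argument.
Hence everything but one factor cancels in `C` and `E`: with `c = x * conj z`, which has modulus
one, `C = L(c)` and `E = U(conj c)`. Finally `U(conj c)^* = c L(conj c)` and
`L(c)^* = conj c U(c)`, so `(CE)^* = E^* C^* = L(conj c) U(c) = C⁻¹ E⁻¹ = (EC)⁻¹`.
-/

section TransferMatrix

variable {R : Type*} [CommRing R]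

/-- The matrix `L(w) = P diag(w, 1) P⁻¹` with `P = [[1, 0], [k, 1]]`: the left factor of the
transfer matrix, bundled as a monoid homomorphism in `w`. -/
def lowerFactor (k : R) : R →* Matrix (Fin 2) (Fin 2) R where
  toFun w := !![w, 0; k * (w - 1), 1]
  map_one' := by simp [one_fin_two]
  map_mul' v w := by
    rw [mul_fin_two]
    ring_nf

/-- The matrix `U(u) = (Pᵀ)⁻¹ diag(1, u) Pᵀ` with `P = [[1, 0], [k, 1]]`: the right factor of the
transfer matrix, bundled as a monoid homomorphism in `u`. -/
def upperFactor (k : R) : R →* Matrix (Fin 2) (Fin 2) R where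
  toFun u := !![1, k * (1 - u); 0, u]
  map_one' := by simp [one_fin_two]
  map_mul' u v := by
    rw [mul_fin_two]
    ring_nf

lemma lowerFactor_apply (k w : R) : lowerFactor k w = !![w, 0; k * (w - 1), 1] := rfl

lemma upperFactor_apply (k u : R) : upperFactor k u = !![1, k * (1 - u); 0, u] := rfl

lemma det_lowerFactor (k w : R) : (lowerFactor k w).det = w := by
  simp [lowerFactor_apply]

lemma det_upperFactor (k u : R) : (upperFactor k u).det = u := by
  simp [upperFactor_apply]

/-- The transfer matrix over an arbitrary commutative ring: `k`, `u`, `w` stand for `r / t`,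
`e^{iθ}`, `e^{-iη}`, and `1 + k ^ 2` for `1 / t ^ 2`. -/
def transferMatrix (k u w : R) : Matrix (Fin 2) (Fin 2) R :=
  !![-w, k * (u * w - w);
     k * (1 - w), -(1 + k ^ 2) * u + k ^ 2 * (u * w + 1 - w)]

lemma transferMatrix_eq_neg_lowerFactor_mul_upperFactor (k u w : R) :
    transferMatrix k u w = -(lowerFactor k w * upperFactor k u) := by
  rw [transferMatrix, lowerFactor_apply, upperFactor_apply, mul_fin_two, neg_of]
  simp only [neg_cons, neg_empty]
  ring_nf

lemma det_transferMatrix (k u w : R) : (transferMatrix k u w).det = w * u := by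
  simp [transferMatrix_eq_neg_lowerFactor_mul_upperFactor, det_neg, det_lowerFactor,
    det_upperFactor]

lemma lowerFactor_mul_transferMatrix (k a u w : R) :
    lowerFactor k a * transferMatrix k u w = transferMatrix k u (a * w) := by
  simp only [transferMatrix_eq_neg_lowerFactor_mul_upperFactor, mul_neg, map_mul,
    Matrix.mul_assoc]

lemma transferMatrix_mul_upperFactor (k u w b : R) :
    transferMatrix k u w * upperFactor k b = transferMatrix k (u * b) w := by
  simp only [transferMatrix_eq_neg_lowerFactor_mul_upperFactor, neg_mul, map_mul,
    Matrix.mul_assoc]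

lemma transferMatrix_mul_inv_transferMatrix (k v : R) {u w w' : R} (hu : IsUnit u)
    (hw : w' * w = 1) :
    transferMatrix k u v * (transferMatrix k u w)⁻¹ = lowerFactor k (v * w') := by
  have hdet : IsUnit (transferMatrix k u w).det := by
    rw [det_transferMatrix]
    exact (IsUnit.of_mul_eq_one_right _ hw).mul hu
  have hfac : lowerFactor k (v * w') * transferMatrix k u w = transferMatrix k u v := by
    rw [lowerFactor_mul_transferMatrix, mul_assoc, hw, mul_one]
  rw [← hfac, mul_nonsing_inv_cancel_right _ _ hdet]

lemma inv_transferMatrix_mul_transferMatrix (k v : R) {u u' w : R} (hu : u * u' = 1)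
    (hw : IsUnit w) :
    (transferMatrix k u w)⁻¹ * transferMatrix k v w = upperFactor k (v * u') := by
  have hdet : IsUnit (transferMatrix k u w).det := by
    rw [det_transferMatrix]
    exact hw.mul (IsUnit.of_mul_eq_one _ hu)
  have hfac : transferMatrix k u w * upperFactor k (v * u') = transferMatrix k v w := by
    rw [transferMatrix_mul_upperFactor, mul_left_comm, hu, mul_one]
  rw [← hfac, nonsing_inv_mul_cancel_left _ _ hdet]

lemma inv_monoidHom_apply {M n : Type*} [Monoid M] [Fintype n] [DecidableEq n]
    (f : M →* Matrix n n R) {a b : M} (h : a * b = 1) : (f a)⁻¹ = f b :=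
  inv_eq_right_inv (by rw [← map_mul, h, map_one])

variable [StarRing R] {k c : R}

lemma conjTranspose_lowerFactor (hk : IsSelfAdjoint k) (hc : star c * c = 1) :
    (lowerFactor k c)ᴴ = star c • upperFactor k c := by
  have hoffdiag : star (k * (c - 1)) = star c * (k * (1 - c)) := by
    rw [star_mul', hk.star_eq, star_sub, star_one]
    linear_combination k * hc
  ext i j
  fin_cases i <;> fin_cases j <;>
    simp [lowerFactor_apply, upperFactor_apply, hc, hoffdiag, -star_mul, -star_mul']

lemma conjTranspose_upperFactor (hk : IsSelfAdjoint k) (hc : star c * c = 1) :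
    (upperFactor k c)ᴴ = star c • lowerFactor k c := by
  rw [← conjTranspose_conjTranspose (lowerFactor k c), conjTranspose_lowerFactor hk hc,
    conjTranspose_smul, star_star, smul_smul, hc, one_smul]

lemma inv_upperFactor_star_mul_lowerFactor (hk : IsSelfAdjoint k) (hc : c ∈ unitary R) :
    (upperFactor k (star c) * lowerFactor k c)⁻¹ =
      (lowerFactor k c * upperFactor k (star c))ᴴ := by
  obtain ⟨hc', hc⟩ := Unitary.mem_iff.mp hc
  calc (upperFactor k (star c) * lowerFactor k c)⁻¹
      = lowerFactor k (star c) * upperFactor k c := by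
        rw [Matrix.mul_inv_rev, inv_monoidHom_apply _ hc, inv_monoidHom_apply _ hc']
    _ = (c • lowerFactor k (star c)) * (star c • upperFactor k c) := by
        rw [smul_mul_smul_comm, hc, one_smul]
    _ = (lowerFactor k c * upperFactor k (star c))ᴴ := by
        rw [conjTranspose_mul, conjTranspose_lowerFactor hk hc',
          conjTranspose_upperFactor hk (by rwa [star_star]), star_star]

theorem C_E_formulas_general {x z : R} (hk : IsSelfAdjoint k) (hx : x ∈ unitary R)
    (hz : z ∈ unitary R) {C E : Matrix (Fin 2) (Fin 2) R}
    (hC : C = transferMatrix k (star x) x * (transferMatrix k (star x) z)⁻¹)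
    (hE : E = (transferMatrix k (star z) x)⁻¹ * transferMatrix k (star x) x) :
    C = !![x * star z, 0; k * (x * star z - 1), 1] ∧
    E = !![1, k * (1 - star x * z); 0, star x * z] ∧
    (C * E).det = 1 ∧ (E * C).det = 1 ∧ (E * C)⁻¹ = (C * E)ᴴ := by
  have hc : x * star z ∈ unitary R := mul_mem hx (Unitary.star_mem hz)
  have hstar : star (x * star z) = star x * z := by rw [star_mul', star_star]
  have hCL : C = lowerFactor k (x * star z) := by
    rw [hC, transferMatrix_mul_inv_transferMatrix k x
      (IsUnit.of_mul_eq_one _ (Unitary.star_mul_self_of_mem hx)) (Unitary.star_mul_self_of_mem hz)]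
  have hEU : E = upperFactor k (star (x * star z)) := by
    rw [hE, hstar, inv_transferMatrix_mul_transferMatrix k (star x)
      (Unitary.star_mul_self_of_mem hz) (IsUnit.of_mul_eq_one _ (Unitary.mul_star_self_of_mem hx))]
  have hdet : (C * E).det = 1 := by
    rw [det_mul, hCL, hEU, det_lowerFactor, det_upperFactor, Unitary.mul_star_self_of_mem hc]
  refine ⟨hCL, by rw [hEU, hstar, upperFactor_apply], hdet, by rw [det_mul_comm, hdet], ?_⟩
  rw [hCL, hEU, inv_upperFactor_star_mul_lowerFactor hk hc]

end TransferMatrix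

lemma star_exp_neg_ofReal_mul_I (a : ℝ) : star (cexp (-(a : ℂ) * I)) = cexp ((a : ℂ) * I) := by
  rw [← starRingEnd_apply, ← exp_conj]
  simp

lemma exp_neg_ofReal_mul_I_mem_unitary (a : ℝ) : cexp (-(a : ℂ) * I) ∈ unitary ℂ := by
  rw [Unitary.mem_iff_self_mul_star, star_exp_neg_ofReal_mul_I, ← Complex.exp_add]
  simp

lemma Tmat_eq_transferMatrix {t r : ℝ} (ht : t ≠ 0) (hrt : r ^ 2 + t ^ 2 = 1) (θ η : ℝ) :
    Tmat t r θ η =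
      transferMatrix ((r / t : ℝ) : ℂ) (star (cexp (-(θ : ℂ) * I))) (cexp (-(η : ℂ) * I)) := by
  have hexp : cexp (((θ - η : ℝ) : ℂ) * I) = cexp ((θ : ℂ) * I) * cexp (-(η : ℂ) * I) := by
    rw [← Complex.exp_add]
    push_cast
    ring_nf
  have hinv : 1 / t ^ 2 = 1 + (r / t) ^ 2 := by
    field_simp
    linarith
  rw [Tmat, transferMatrix, star_exp_neg_ofReal_mul_I, hexp, hinv, ← div_pow]
  push_cast
  rfl

/-- Explicit formulas for `C = T(θ,θ)T(θ,η)⁻¹` and `E = T(η,θ)⁻¹T(θ,θ)`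
(with `x = e^{-iθ}`, `z = e^{-iη}`); moreover `det(CE) = det(EC) = 1` and `(EC)⁻¹ = (CE)*`. -/
theorem C_E_formulas
    (t r : ℝ) (ht0 : 0 < t) (ht1 : t < 1) (hr0 : 0 < r) (hr1 : r < 1)
    (hrt : r^2 + t^2 = 1) (θ η : ℝ)
    (x z : ℂ) (hx : x = Complex.exp (-(θ:ℂ) * I)) (hz : z = Complex.exp (-(η:ℂ) * I))
    (C E : Matrix (Fin 2) (Fin 2) ℂ)
    (hC : C = Tmat t r θ θ * (Tmat t r θ η)⁻¹)
    (hE : E = (Tmat t r η θ)⁻¹ * Tmat t r θ θ) :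
    C = !![x * (starRingEnd ℂ) z, 0;
           ((r/t : ℝ) : ℂ) * (x * (starRingEnd ℂ) z - 1), 1] ∧
    E = !![1, ((r/t : ℝ) : ℂ) * (1 - (starRingEnd ℂ) x * z);
           0, (starRingEnd ℂ) x * z] ∧
    (C * E).det = 1 ∧ (E * C).det = 1 ∧
    (E * C)⁻¹ = (C * E).conjTranspose := by
  subst hx hz
  simp only [Tmat_eq_transferMatrix ht0.ne' hrt] at hC hE
  exact C_E_formulas_general (conj_ofReal _) (exp_neg_ofReal_mul_I_mem_unitary θ)
    (exp_neg_ofReal_mul_I_mem_unitary η) hC hE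

end
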